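/- Let H be a complex Hilbert space, let a : H →L[ℂ] H be a self-adjoint operator with 0 ≤ a ≤ 1, and let e and f be orthogonal projections on H such that e ≤ f, (1/2) • f ≤ a, and a ≤ e + (1/2) • (1 - e) (all inequalities in the Loewner order). Let v : H →L[ℂ] H with ‖v‖ ≤ 1, let η ∈ H with ‖η‖ = 1, set ξ := v η, and assume ‖ξ‖ = 1, ‖a η‖ < 1/8, and ‖a ξ‖ > 7/8. Then the operator e ∘ v ∘ (1 - f) is nonzero. -/

import Mathlib

/-!
Let `P`, `Q` be the orthogonal projections onto `K`, `L`, and let `s P ≤ a ≤ Q + t (1 - Q)`.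
If `Q v (1 - P) = 0`, then `Q v = Q v P`, so the part of `v η` in `L` is controlled by the part of
`η` in `K`. The lower bound on `a` makes the latter small when `a η` is small, and the upper bound
then forces the quadratic form of `a` at `v η` to be not much larger than `t ‖v η‖²`. Since
`0 ≤ a ≤ 1` implies `a² ≤ a`, this form dominates `‖a (v η)‖²`.
-/

open scoped InnerProductSpace

section

variable {𝕜 E F : Type*} [RCLike 𝕜] [NormedAddCommGroup E] [InnerProductSpace 𝕜 E]
  [NormedAddCommGroup F] [InnerProductSpace 𝕜 F]

section Loewner

variable {a b : E →L[𝕜] E}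

lemma re_inner_apply_self_mono (hab : a ≤ b) (x : E) :
    RCLike.re ⟪a x, x⟫_𝕜 ≤ RCLike.re ⟪b x, x⟫_𝕜 := by
  have h := hab.re_inner_nonneg_left x
  rwa [sub_apply, inner_sub_left, map_sub, sub_nonneg] at h

-- The operator inequality `a² ≤ a`, from `a - a² = a (1 - a) a + (1 - a) a (1 - a)`.
lemma norm_apply_sq_le_re_inner_apply_self (ha₀ : 0 ≤ a) (ha₁ : a ≤ 1) (x : E) :
    ‖a x‖ ^ 2 ≤ RCLike.re ⟪a x, x⟫_𝕜 := by
  rw [ContinuousLinearMap.nonneg_iff_isPositive] at ha₀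
  have h₁ : 0 ≤ RCLike.re ⟪a x - a (a x), a x⟫_𝕜 := ha₁.re_inner_nonneg_left (a x)
  have h₂ : 0 ≤ RCLike.re ⟪a (x - a x), x - a x⟫_𝕜 := ha₀.re_inner_nonneg_left (x - a x)
  have h_symm : ⟪a (a x), x⟫_𝕜 = ⟪a x, a x⟫_𝕜 := ha₀.inner_left_eq_inner_right (a x) x
  simp only [map_sub, inner_sub_left, inner_sub_right, h_symm, inner_self_eq_norm_sq] at h₁ h₂
  linarith

end Loewner

section Projection

variable (K : Submodule 𝕜 E) [K.HasOrthogonalProjection] {a : E →L[𝕜] E} {s t : ℝ}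

lemma smul_starProjection_nonneg (hs : 0 ≤ s) : 0 ≤ (s : 𝕜) • K.starProjection := by
  have hK : K.starProjection.IsPositive := K.isSymmetricProjection_starProjection.isPositive
  rw [ContinuousLinearMap.nonneg_iff_isPositive]
  exact hK.smul_of_nonneg (RCLike.ofReal_nonneg.mpr hs)

lemma starProjection_add_smul_one_sub_le_one (ht : t ≤ 1) :
    K.starProjection + (t : 𝕜) • (1 - K.starProjection) ≤ 1 := by
  have h_eq : 1 - (K.starProjection + (t : 𝕜) • (1 - K.starProjection)) =
      ((1 - t : ℝ) : 𝕜) • Kᗮ.starProjection := by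
    rw [K.starProjection_orthogonal']
    push_cast
    module
  rw [ContinuousLinearMap.le_def, h_eq, ← ContinuousLinearMap.nonneg_iff_isPositive]
  exact smul_starProjection_nonneg Kᗮ (sub_nonneg.mpr ht)

lemma mul_norm_starProjection_sq_le (h : (s : 𝕜) • K.starProjection ≤ a) (x : E) :
    s * ‖K.starProjection x‖ ^ 2 ≤ RCLike.re ⟪a x, x⟫_𝕜 := by
  simpa [inner_smul_left, K.re_inner_starProjection_eq_normSq] using re_inner_apply_self_mono h x

lemma re_inner_apply_self_le_of_le_starProjection_add
    (h : a ≤ K.starProjection + (t : 𝕜) • (1 - K.starProjection)) (x : E) :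
    RCLike.re ⟪a x, x⟫_𝕜 ≤ t * ‖x‖ ^ 2 + (1 - t) * ‖K.starProjection x‖ ^ 2 :=
  calc RCLike.re ⟪a x, x⟫_𝕜
      ≤ RCLike.re ⟪(K.starProjection + (t : 𝕜) • (1 - K.starProjection)) x, x⟫_𝕜 :=
        re_inner_apply_self_mono h x
    _ = ‖K.starProjection x‖ ^ 2 + t * (‖x‖ ^ 2 - ‖K.starProjection x‖ ^ 2) := by
        simp [inner_add_left, inner_sub_left, inner_smul_left, K.re_inner_starProjection_eq_normSq]
    _ = t * ‖x‖ ^ 2 + (1 - t) * ‖K.starProjection x‖ ^ 2 := by ring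

lemma norm_starProjection_apply_le_of_comp_eq_zero (L : Submodule 𝕜 F) [L.HasOrthogonalProjection]
    {v : E →L[𝕜] F} (h : L.starProjection ∘L v ∘L (1 - K.starProjection) = 0) (x : E) :
    ‖L.starProjection (v x)‖ ≤ ‖v‖ * ‖K.starProjection x‖ := by
  have h_eq : L.starProjection (v x) = L.starProjection (v (K.starProjection x)) := by
    simpa [sub_eq_zero] using DFunLike.congr_fun h x
  calc ‖L.starProjection (v x)‖
      = ‖L.starProjection (v (K.starProjection x))‖ := by rw [h_eq]
    _ ≤ ‖v (K.starProjection x)‖ := L.norm_starProjection_apply_le _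
    _ ≤ ‖v‖ * ‖K.starProjection x‖ := v.le_opNorm _

end Projection

theorem stmt0_general (K L : Submodule 𝕜 E) [K.HasOrthogonalProjection]
    [L.HasOrthogonalProjection] (a v : E →L[𝕜] E) {s t : ℝ} (hs : 0 ≤ s) (ht : t ≤ 1)
    (hKa : (s : 𝕜) • K.starProjection ≤ a)
    (haL : a ≤ L.starProjection + (t : 𝕜) • (1 - L.starProjection)) (η : E)
    (h_gap : s * (t * ‖v η‖ ^ 2) + (1 - t) * (‖v‖ ^ 2 * (‖a η‖ * ‖η‖)) < s * ‖a (v η)‖ ^ 2) :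
    L.starProjection * v * (1 - K.starProjection) ≠ 0 := by
  intro h_zero
  have ha₀ : 0 ≤ a := (smul_starProjection_nonneg K hs).trans hKa
  have ha₁ : a ≤ 1 := haL.trans (starProjection_add_smul_one_sub_le_one L ht)
  have hK : s * ‖K.starProjection η‖ ^ 2 ≤ ‖a η‖ * ‖η‖ :=
    (mul_norm_starProjection_sq_le K hKa η).trans (re_inner_le_norm _ _)
  have hL : s * ‖L.starProjection (v η)‖ ^ 2 ≤ ‖v‖ ^ 2 * (‖a η‖ * ‖η‖) :=
    calc s * ‖L.starProjection (v η)‖ ^ 2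
        ≤ s * (‖v‖ * ‖K.starProjection η‖) ^ 2 := by
          gcongr
          exact norm_starProjection_apply_le_of_comp_eq_zero K L h_zero η
      _ = ‖v‖ ^ 2 * (s * ‖K.starProjection η‖ ^ 2) := by ring
      _ ≤ ‖v‖ ^ 2 * (‖a η‖ * ‖η‖) := by gcongr
  refine h_gap.not_ge ?_
  calc s * ‖a (v η)‖ ^ 2
      ≤ s * (t * ‖v η‖ ^ 2 + (1 - t) * ‖L.starProjection (v η)‖ ^ 2) := by
        gcongr
        exact (norm_apply_sq_le_re_inner_apply_self ha₀ ha₁ _).trans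
          (re_inner_apply_self_le_of_le_starProjection_add L haL _)
    _ = s * (t * ‖v η‖ ^ 2) + (1 - t) * (s * ‖L.starProjection (v η)‖ ^ 2) := by ring
    _ ≤ s * (t * ‖v η‖ ^ 2) + (1 - t) * (‖v‖ ^ 2 * (‖a η‖ * ‖η‖)) := by
        gcongr

end

/-- Analytic core of the key lemma: if `a` is a self-adjoint contraction with `0 ≤ a ≤ 1`
(Loewner order), `e ≤ f` are orthogonal projections with `(1/2) • f ≤ a` and
`a ≤ e + (1/2) • (1 - e)`, `v` is a contraction, `η` a unit vector with `ξ := v η` a unit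
vector, `‖a η‖ < 1/8` and `‖a ξ‖ > 7/8`, then `e ∘ v ∘ (1 - f) ≠ 0`. -/
theorem stmt0 {H : Type*} [NormedAddCommGroup H] [InnerProductSpace ℂ H] [CompleteSpace H]
    (a e f v : H →L[ℂ] H)
    (ha_pos : a.IsPositive) (ha_le_one : ((1 : H →L[ℂ] H) - a).IsPositive)
    (he_sa : IsSelfAdjoint e) (he_idem : e * e = e)
    (hf_sa : IsSelfAdjoint f) (hf_idem : f * f = f)
    (hef : (f - e).IsPositive)
    (hfa : (a - (1 / 2 : ℂ) • f).IsPositive)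
    (hae : ((e + (1 / 2 : ℂ) • ((1 : H →L[ℂ] H) - e)) - a).IsPositive)
    (hv : ‖v‖ ≤ 1)
    (η : H) (hη : ‖η‖ = 1) (hξ : ‖v η‖ = 1)
    (haη : ‖a η‖ < 1 / 8) (haξ : ‖a (v η)‖ > 7 / 8) :
    e * v * ((1 : H →L[ℂ] H) - f) ≠ 0 := by
  obtain ⟨L, _, rfl⟩ := isStarProjection_iff_eq_starProjection.mp ⟨he_idem, he_sa⟩
  obtain ⟨K, _, rfl⟩ := isStarProjection_iff_eq_starProjection.mp ⟨hf_idem, hf_sa⟩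
  have h_small : ‖v‖ ^ 2 * ‖a η‖ ≤ ‖a η‖ :=
    mul_le_of_le_one_left (norm_nonneg _) (pow_le_one₀ (norm_nonneg v) hv)
  refine stmt0_general K L a v (s := 1 / 2) (t := 1 / 2) (by norm_num) (by norm_num)
    (by simpa [ContinuousLinearMap.le_def] using hfa)
    (by simpa [ContinuousLinearMap.le_def] using hae) η ?_
  rw [hη, hξ]
  nlinarith
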